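/- arXiv:1710.01181 — 3 statements merged into one kernel-verified Lean document; each statement's English description precedes it below -/
import Mathlib

section
/- Let f(x;a) = b3(a)x³ + b2(a)x² + b1(a)x + b0(a) be a real cubic polynomial whose coefficients b0, b1, b2, b3 are continuously differentiable in a on a bounded closed set Π ⊂ ℝ. Suppose there are positive constants c6, c7, c8, C and exponents ι, β, κ with ε ≤ ε0^ι, β < (4/3)ι, κ < β + (4/3)ι, such that |‖b0|‖_Π ≤ C ε⁴, |‖b1|‖_Π ≤ C ε0^κ, inf_{a∈Π} |b1(a)| ≥ c6 ε0^κ, |‖b2|‖_Π ≤ C ε0^β, |‖b3|‖_Π ≤ c7, and inf_{a∈Π} |b3(a)| ≥ c8. Then, for ε0 sufficiently small, the equation f(x;a) = 0 has a real root x0(a) which is continuously differentiable in a ∈ Π and satisfies |‖x0|‖_Π ≤ c9 ε^{4/3} for a positive constant c9 (i.e. sup_{a∈Π} |x0(a)| ≤ c9 ε^{4/3} and sup_{a∈Π} |dx0/da| ≤ c9 ε^{4/3}). -/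
open Real

/-- derivative nonvanishing in `x` -/
lemma csr_slope (p1 p2 p3 δ x y : ℝ) (hδ : 0 < δ) (hx : |x| ≤ δ) (hy : |y| ≤ δ)
    (h : 2 * |p2| * δ + 3 * |p3| * δ ^ 2 < |p1|) :
    p1 + p2 * (x + y) + p3 * (x ^ 2 + x * y + y ^ 2) ≠ 0 := by
  intro h0
  have h1 : p1 = -(p2 * (x + y) + p3 * (x ^ 2 + x * y + y ^ 2)) := by linarith
  have e1 : |x + y| ≤ 2 * δ := (abs_add_le _ _).trans (by linarith)
  have e2 : |x ^ 2 + x * y + y ^ 2| ≤ 3 * δ ^ 2 := by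
    have a1 : |x ^ 2| ≤ δ ^ 2 := by rw [abs_pow]; gcongr
    have a2 : |y ^ 2| ≤ δ ^ 2 := by rw [abs_pow]; gcongr
    have a3 : |x * y| ≤ δ * δ := by rw [abs_mul]; gcongr
    have := abs_add_le (x ^ 2 + x * y) (y ^ 2)
    have := abs_add_le (x ^ 2) (x * y)
    nlinarith
  have e3 : |p1| ≤ |p2| * (2 * δ) + |p3| * (3 * δ ^ 2) := by
    rw [h1, abs_neg]
    refine (abs_add_le _ _).trans ?_
    rw [abs_mul, abs_mul]
    gcongr
  linarith

lemma csr_exists_pos (p0 p1 p2 p3 δ : ℝ) (hδ : 0 < δ) (hp : 0 < p1)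
    (h : |p0| + 2 * |p2| * δ ^ 2 + 3 * |p3| * δ ^ 3 < |p1| * δ) :
    ∃ x, |x| < δ ∧ p3 * x ^ 3 + p2 * x ^ 2 + p1 * x + p0 = 0 := by
  rw [abs_of_pos hp] at h
  have hc : ContinuousOn (fun x : ℝ => p3 * x ^ 3 + p2 * x ^ 2 + p1 * x + p0) (Set.Icc (-δ) δ) := by
    fun_prop
  have d2 : 0 < δ ^ 2 := by positivity
  have d3 : 0 < δ ^ 3 := by positivity
  have q2 : 0 ≤ |p2| * δ ^ 2 := by positivity
  have q3 : 0 ≤ |p3| * δ ^ 3 := by positivity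
  have u2 := mul_le_mul_of_nonneg_right (le_abs_self p2) d2.le
  have l2 := mul_le_mul_of_nonneg_right (neg_abs_le p2) d2.le
  have u3 := mul_le_mul_of_nonneg_right (le_abs_self p3) d3.le
  have l3 := mul_le_mul_of_nonneg_right (neg_abs_le p3) d3.le
  have u0 := le_abs_self p0
  have l0 := neg_abs_le p0
  have := intermediate_value_Ioo (by linarith : -δ ≤ δ) hc
  obtain ⟨x, hx, hx0⟩ := this (show (0:ℝ) ∈ _ from ⟨by ring_nf; nlinarith, by ring_nf; nlinarith⟩)
  exact ⟨x, abs_lt.2 hx, hx0⟩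

lemma csr_exists (p0 p1 p2 p3 δ : ℝ) (hδ : 0 < δ)
    (h : |p0| + 2 * |p2| * δ ^ 2 + 3 * |p3| * δ ^ 3 < |p1| * δ) :
    ∃ x, |x| < δ ∧ p3 * x ^ 3 + p2 * x ^ 2 + p1 * x + p0 = 0 := by
  rcases lt_trichotomy p1 0 with hp | hp | hp
  · obtain ⟨x, hx, h0⟩ := csr_exists_pos (-p0) (-p1) (-p2) (-p3) δ hδ (by linarith)
      (by simpa only [abs_neg] using h)
    exact ⟨x, hx, by linarith⟩
  · exfalso
    have : 0 ≤ |p0| + 2 * |p2| * δ ^ 2 + 3 * |p3| * δ ^ 3 := by positivity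
    rw [hp] at h
    simp only [abs_zero, zero_mul] at h
    linarith
  · exact csr_exists_pos p0 p1 p2 p3 δ hδ hp h

lemma csr_cond (p0 p1 p2 p3 δ : ℝ) (hδ : 0 < δ)
    (h : |p0| + 2 * |p2| * δ ^ 2 + 3 * |p3| * δ ^ 3 < |p1| * δ) :
    2 * |p2| * δ + 3 * |p3| * δ ^ 2 < |p1| := by
  have := abs_nonneg p0
  refine lt_of_mul_lt_mul_right ?_ hδ.le
  nlinarith

/-- scalar implicit function theorem -/
lemma csr_ift (f : ℝ × ℝ → ℝ) (a x d : ℝ) (hf : ContDiffAt ℝ 1 f (a, x))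
    (hd : HasDerivAt (fun y => f (a, y)) d x) (hd0 : d ≠ 0) :
    ∃ φ : ℝ → ℝ, ContDiffAt ℝ 1 φ a ∧ φ a = x ∧
      ∀ᶠ b in nhds a, f (b, φ b) = f (a, x) := by
  have hF := (hf.differentiableAt (by norm_num)).hasFDerivAt
  have hi : HasDerivAt (fun y : ℝ => (a, y)) ((0 : ℝ), (1 : ℝ)) x :=
    (hasDerivAt_const x a).prodMk (hasDerivAt_id x)
  have h1 : fderiv ℝ f (a, x) (0, 1) = d :=
    (HasFDerivAt.comp_hasDerivAt x hF hi).unique hd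
  have inv : (fderiv ℝ f (a, x) ∘L .inr ℝ ℝ ℝ).IsInvertible := by
    refine ⟨ContinuousLinearEquiv.unitsEquivAut ℝ (Units.mk0 d hd0), ?_⟩
    ext
    simp [h1]
  exact ⟨hf.implicitFunction one_ne_zero inv, hf.contDiffAt_implicitFunction one_ne_zero inv,
    hf.implicitFunction_apply_self one_ne_zero inv,
    hf.eventually_apply_implicitFunction one_ne_zero inv⟩

lemma csr_branch (b0 b1 b2 b3 : ℝ → ℝ) (δ : ℝ) (hδ : 0 < δ) (U : Set ℝ) (hU : IsOpen U)
    (h0 : ContDiffOn ℝ 1 b0 U) (h1 : ContDiffOn ℝ 1 b1 U)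
    (h2 : ContDiffOn ℝ 1 b2 U) (h3 : ContDiffOn ℝ 1 b3 U)
    (hc : ∀ a ∈ U, |b0 a| + 2 * |b2 a| * δ ^ 2 + 3 * |b3 a| * δ ^ 3 < |b1 a| * δ) :
    ∃ x0 : ℝ → ℝ, ContDiffOn ℝ 1 x0 U ∧ ∀ a ∈ U, |x0 a| < δ ∧
      b3 a * x0 a ^ 3 + b2 a * x0 a ^ 2 + b1 a * x0 a + b0 a = 0 := by
  have key : ∀ a, ∃ x, a ∈ U → |x| < δ ∧ b3 a * x ^ 3 + b2 a * x ^ 2 + b1 a * x + b0 a = 0 := by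
    intro a
    by_cases ha : a ∈ U
    · obtain ⟨x, hx⟩ := csr_exists _ _ _ _ δ hδ (hc a ha)
      exact ⟨x, fun _ => hx⟩
    · exact ⟨0, fun h => absurd h ha⟩
  choose x0 hx0 using key
  refine ⟨x0, ?_, hx0⟩
  intro a ha
  have hn : U ∈ nhds a := hU.mem_nhds ha
  have g0 := h0.contDiffAt hn
  have g1 := h1.contDiffAt hn
  have g2 := h2.contDiffAt hn
  have g3 := h3.contDiffAt hn
  apply ContDiffAt.contDiffWithinAt
  have hfst : ContDiffAt ℝ 1 (Prod.fst : ℝ × ℝ → ℝ) (a, x0 a) := contDiffAt_fst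
  have hsnd : ContDiffAt ℝ 1 (Prod.snd : ℝ × ℝ → ℝ) (a, x0 a) := contDiffAt_snd
  have k0 : ContDiffAt ℝ 1 (fun p : ℝ × ℝ => b0 p.1) (a, x0 a) := ContDiffAt.comp (g := b0) (a, x0 a) g0 hfst
  have k1 : ContDiffAt ℝ 1 (fun p : ℝ × ℝ => b1 p.1) (a, x0 a) := ContDiffAt.comp (g := b1) (a, x0 a) g1 hfst
  have k2 : ContDiffAt ℝ 1 (fun p : ℝ × ℝ => b2 p.1) (a, x0 a) := ContDiffAt.comp (g := b2) (a, x0 a) g2 hfst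
  have k3 : ContDiffAt ℝ 1 (fun p : ℝ × ℝ => b3 p.1) (a, x0 a) := ContDiffAt.comp (g := b3) (a, x0 a) g3 hfst
  have hf : ContDiffAt ℝ 1 (fun p : ℝ × ℝ => b3 p.1 * p.2 ^ 3 + b2 p.1 * p.2 ^ 2 + b1 p.1 * p.2 + b0 p.1)
      (a, x0 a) :=
    (((k3.mul (hsnd.pow 3)).add (k2.mul (hsnd.pow 2))).add (k1.mul hsnd)).add k0
  obtain ⟨hxa, hra⟩ := hx0 a ha
  have hd : HasDerivAt (fun y : ℝ => b3 a * y ^ 3 + b2 a * y ^ 2 + b1 a * y + b0 a)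
      (b1 a + b2 a * (x0 a + x0 a) + b3 a * (x0 a ^ 2 + x0 a * x0 a + x0 a ^ 2)) (x0 a) := by
    have := ((((hasDerivAt_pow 3 (x0 a)).const_mul (b3 a)).add
      ((hasDerivAt_pow 2 (x0 a)).const_mul (b2 a))).add
      ((hasDerivAt_id (x0 a)).const_mul (b1 a))).add_const (b0 a)
    refine this.congr_deriv ?_
    norm_num
    ring
  obtain ⟨φ, hφ, hφa, hφe⟩ := csr_ift _ a (x0 a) _ hf hd
    (csr_slope _ _ _ δ _ _ hδ hxa.le hxa.le (csr_cond _ _ _ _ δ hδ (hc a ha)))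
  refine hφ.congr_of_eventuallyEq ?_
  have hlt : ∀ᶠ b in nhds a, |φ b| < δ := by
    have : ContinuousAt (fun b => |φ b|) a := hφ.continuousAt.abs
    exact this.eventually_lt continuousAt_const (by simpa [hφa] using hxa)
  filter_upwards [hφe, hlt, hn] with b hb1 hb2 hb3
  obtain ⟨hxb, hrb⟩ := hx0 b hb3
  simp only [hra] at hb1
  by_contra hne
  have hs := csr_slope (b1 b) (b2 b) (b3 b) δ (x0 b) (φ b) hδ hxb.le hb2.le
    (csr_cond _ _ _ _ δ hδ (hc b hb3))
  apply mul_ne_zero (sub_ne_zero.2 hne) hs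
  linear_combination hrb - hb1

lemma csr_eps (c6 c7 C ι β κ : ℝ) (hc6 : 0 < c6) (hβι : β < 4 / 3 * ι) (hκβ : κ < β + 4 / 3 * ι) :
    ∃ e : ℝ, 0 < e ∧ ∀ ε0, 0 < ε0 → ε0 ≤ e →
      (C + 3 * c7) * (ε0 ^ (4 / 3 * ι)) ^ 2 + 2 * C * ε0 ^ β * ε0 ^ (4 / 3 * ι)
        < c6 / 2 * ε0 ^ κ := by
  have p1 : 0 < 4 / 3 * ι + 4 / 3 * ι - κ := by linarith
  have p2 : 0 < β + 4 / 3 * ι - κ := by linarith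
  have hcont : ContinuousAt (fun t : ℝ => (C + 3 * c7) * t ^ (4 / 3 * ι + 4 / 3 * ι - κ)
      + 2 * C * t ^ (β + 4 / 3 * ι - κ)) 0 := by
    have a1 := Real.continuousAt_rpow_const 0 _ (Or.inr p1.le)
    have a2 := Real.continuousAt_rpow_const 0 _ (Or.inr p2.le)
    fun_prop
  have hev := hcont.eventually_lt (continuousAt_const (y := c6 / 2))
    (by simp [Real.zero_rpow p1.ne', Real.zero_rpow p2.ne', hc6])
  obtain ⟨r, hr, hball⟩ := Metric.eventually_nhds_iff.1 hev
  refine ⟨r / 2, by positivity, fun t ht hte => ?_⟩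
  have := hball (y := t) (by rw [Real.dist_eq, sub_zero, abs_of_pos ht]; linarith)
  have hk : 0 < t ^ κ := Real.rpow_pos_of_pos ht _
  rw [Real.rpow_sub ht, Real.rpow_sub ht, Real.rpow_add ht, Real.rpow_add ht] at this
  have h2 := mul_lt_mul_of_pos_right this hk
  calc _ = _ := ?_
    _ < _ := h2
  field_simp

/-- existence of a small real root, continuously differentiable in the
parameter, for a real cubic `b3 x³ + b2 x² + b1 x + b0` whose coefficients satisfy
the indicated bounds in terms of small parameters `ε ≤ ε0^ι`.  The norm
`|‖h|‖_Π = max(sup_Π |h|, sup_Π |h'|)` is expressed by pointwise bounds on the value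
and the derivative.  The constants `ε0*` and `c9` depend only on the constants
`c6, c7, c8, C, ι, β, κ`. -/
theorem cubic_small_root (c6 c7 c8 C ι β κ : ℝ)
    (hc6 : 0 < c6) (hc7 : 0 < c7) (hc8 : 0 < c8) (hC : 0 < C)
    (hι : 0 < ι) (hβ : 0 < β) (hκ : 0 < κ)
    (hβι : β < 4 / 3 * ι) (hκβ : κ < β + 4 / 3 * ι) :
    ∃ ε0star : ℝ, 0 < ε0star ∧ ∃ c9 : ℝ, 0 < c9 ∧
      ∀ ε0 ε : ℝ, 0 < ε0 → ε0 ≤ ε0star → 0 < ε → ε ≤ ε0 ^ ι →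
      ∀ Pa : Set ℝ, IsClosed Pa → Bornology.IsBounded Pa →
      ∀ b0 b1 b2 b3 : ℝ → ℝ,
      -- continuous differentiability of the coefficients in a neighborhood of Pa
      (∃ U : Set ℝ, IsOpen U ∧ Pa ⊆ U ∧ ContDiffOn ℝ 1 b0 U ∧ ContDiffOn ℝ 1 b1 U ∧
        ContDiffOn ℝ 1 b2 U ∧ ContDiffOn ℝ 1 b3 U) →
      -- |‖b0|‖_Π ≤ C ε⁴
      (∀ a ∈ Pa, |b0 a| ≤ C * ε ^ (4 : ℕ) ∧ |deriv b0 a| ≤ C * ε ^ (4 : ℕ)) →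
      -- |‖b1|‖_Π ≤ C ε0^κ and inf_Π |b1| ≥ c6 ε0^κ
      (∀ a ∈ Pa, |b1 a| ≤ C * ε0 ^ κ ∧ |deriv b1 a| ≤ C * ε0 ^ κ) →
      (∀ a ∈ Pa, c6 * ε0 ^ κ ≤ |b1 a|) →
      -- |‖b2|‖_Π ≤ C ε0^β
      (∀ a ∈ Pa, |b2 a| ≤ C * ε0 ^ β ∧ |deriv b2 a| ≤ C * ε0 ^ β) →
      -- |‖b3|‖_Π ≤ c7 and inf_Π |b3| ≥ c8
      (∀ a ∈ Pa, |b3 a| ≤ c7 ∧ |deriv b3 a| ≤ c7) →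
      (∀ a ∈ Pa, c8 ≤ |b3 a|) →
      ∃ x0 : ℝ → ℝ,
        (∃ U : Set ℝ, IsOpen U ∧ Pa ⊆ U ∧ ContDiffOn ℝ 1 x0 U) ∧
        (∀ a ∈ Pa, b3 a * x0 a ^ 3 + b2 a * x0 a ^ 2 + b1 a * x0 a + b0 a = 0) ∧
        (∀ a ∈ Pa, |x0 a| ≤ c9 * ε ^ ((4 : ℝ) / 3) ∧ |deriv x0 a| ≤ c9 * ε ^ ((4 : ℝ) / 3)) := by
  obtain ⟨e, he, hsmall⟩ := csr_eps c6 c7 C ι β κ hc6 hβι hκβ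
  refine ⟨e, he, 1 + 2 * C / c6, by positivity, ?_⟩
  intro ε0 ε hε0 hε0e hε hεε Pa _ _ b0 b1 b2 b3 ⟨U, hU, hPU, s0, s1, s2, s3⟩ hb0 hb1 hb1' hb2 hb3 _
  obtain ⟨δ, hδdef⟩ : ∃ δ, δ = ε ^ ((4 : ℝ) / 3) := ⟨_, rfl⟩
  rw [← hδdef]
  have hδ : 0 < δ := hδdef ▸ Real.rpow_pos_of_pos hε _
  have hε4 : ε ^ (4 : ℕ) = δ ^ 3 := by
    rw [hδdef, ← Real.rpow_natCast, ← Real.rpow_natCast, ← Real.rpow_mul hε.le]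
    norm_num
  have hδle : δ ≤ ε0 ^ (4 / 3 * ι) := by
    rw [hδdef, mul_comm, Real.rpow_mul hε0.le]
    exact Real.rpow_le_rpow hε.le hεε (by norm_num)
  have hs := hsmall ε0 hε0 hε0e
  rw [hε4] at hb0
  have hB : 0 < ε0 ^ β := Real.rpow_pos_of_pos hε0 _
  have hK : 0 < ε0 ^ κ := Real.rpow_pos_of_pos hε0 _
  generalize ε0 ^ β = B at *
  generalize ε0 ^ κ = K at *
  have hs' : (C + 3 * c7) * δ ^ 2 + 2 * C * B * δ < c6 / 2 * K := by
    refine lt_of_le_of_lt ?_ hs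
    gcongr
  have hV : ∀ a ∈ Pa, |b0 a| + 2 * |b2 a| * δ ^ 2 + 3 * |b3 a| * δ ^ 3 < |b1 a| * δ := by
    intro a ha
    calc _ ≤ C * δ ^ 3 + 2 * (C * B) * δ ^ 2 + 3 * c7 * δ ^ 3 := by
          have := (hb0 a ha).1
          have := (hb2 a ha).1
          have := (hb3 a ha).1
          gcongr
      _ = ((C + 3 * c7) * δ ^ 2 + 2 * C * B * δ) * δ := by ring
      _ < (c6 / 2 * K) * δ := by gcongr
      _ ≤ (c6 * K) * δ := by
          have : 0 < c6 * K * δ := by positivity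
          linarith
      _ ≤ _ := by
          have := hb1' a ha
          gcongr
  -- the open neighbourhood
  have c0 := s0.continuousOn
  have c1 := s1.continuousOn
  have c2 := s2.continuousOn
  have c3 := s3.continuousOn
  have hg : ContinuousOn (fun a => |b1 a| * δ
      - (|b0 a| + 2 * |b2 a| * δ ^ 2 + 3 * |b3 a| * δ ^ 3)) U := by fun_prop
  have hW := hg.isOpen_inter_preimage hU (isOpen_Ioi (a := (0 : ℝ)))
  set W := U ∩ (fun a => |b1 a| * δ
      - (|b0 a| + 2 * |b2 a| * δ ^ 2 + 3 * |b3 a| * δ ^ 3)) ⁻¹' Set.Ioi 0 with hWdef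
  have hWU : W ⊆ U := Set.inter_subset_left
  have hPW : Pa ⊆ W := fun a ha => ⟨hPU ha, sub_pos.2 (hV a ha)⟩
  obtain ⟨x0, hx0, hroot⟩ := csr_branch b0 b1 b2 b3 δ hδ W hW (s0.mono hWU) (s1.mono hWU)
    (s2.mono hWU) (s3.mono hWU) (fun a ha => sub_pos.1 ha.2)
  refine ⟨x0, ⟨W, hW, hPW, hx0⟩, fun a ha => (hroot a (hPW ha)).2, fun a ha => ?_⟩
  obtain ⟨hxa, hra⟩ := hroot a (hPW ha)
  refine ⟨hxa.le.trans ?_, ?_⟩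
  · have : 0 < 2 * C / c6 * δ := by positivity
    linarith
  have hWn : W ∈ nhds a := hW.mem_nhds (hPW ha)
  have hUn : U ∈ nhds a := hU.mem_nhds (hPU ha)
  have dx := ((hx0.contDiffAt hWn).differentiableAt (by norm_num)).hasDerivAt
  have d0 := ((s0.contDiffAt hUn).differentiableAt (by norm_num)).hasDerivAt
  have d1 := ((s1.contDiffAt hUn).differentiableAt (by norm_num)).hasDerivAt
  have d2 := ((s2.contDiffAt hUn).differentiableAt (by norm_num)).hasDerivAt
  have d3 := ((s3.contDiffAt hUn).differentiableAt (by norm_num)).hasDerivAt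
  have dtot := (((d3.mul (dx.pow 3)).add (d2.mul (dx.pow 2))).add (d1.mul dx)).add d0
  have dzero : HasDerivAt (fun _ : ℝ => (0 : ℝ)) 0 a := hasDerivAt_const _ _
  have heq := dtot.unique (dzero.congr_of_eventuallyEq (by
    filter_upwards [hWn] with b hb
    exact (hroot b hb).2))
  simp only [Pi.pow_apply] at heq
  obtain ⟨hb0a, hb0d⟩ := hb0 a ha
  obtain ⟨hb1a, hb1d⟩ := hb1 a ha
  obtain ⟨hb2a, hb2d⟩ := hb2 a ha
  obtain ⟨hb3a, hb3d⟩ := hb3 a ha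
  have hb1l := hb1' a ha
  generalize deriv x0 a = X at *
  generalize deriv b0 a = D0 at *
  generalize deriv b1 a = D1 at *
  generalize deriv b2 a = D2 at *
  generalize deriv b3 a = D3 at *
  generalize x0 a = x at *
  have hx2 : |x| ^ 2 ≤ δ ^ 2 := by gcongr
  have hx3 : |x| ^ 3 ≤ δ ^ 3 := by gcongr
  -- key identity
  have hid : b1 a * X = -(D3 * x ^ 3) - D2 * x ^ 2 - D1 * x - D0 - 2 * b2 a * x * X
      - 3 * b3 a * x ^ 2 * X := by
    norm_num at heq
    linear_combination heq
  have habs : |b1 a| * |X| ≤ |D3| * |x| ^ 3 + |D2| * |x| ^ 2 + |D1| * |x| + |D0|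
      + 2 * |b2 a| * |x| * |X| + 3 * |b3 a| * |x| ^ 2 * |X| := by
    rw [← abs_mul, hid]
    refine (abs_sub _ _).trans ?_
    refine (add_le_add_left ((abs_sub _ _).trans (add_le_add_left ((abs_sub _ _).trans (add_le_add_left ((abs_sub _ _).trans (add_le_add_left (abs_sub _ _) _)) _)) _)) _).trans ?_
    simp only [abs_neg, abs_mul, abs_pow, Nat.abs_ofNat]
    exact le_refl _
  have hupper : |b1 a| * |X| ≤ c7 * δ ^ 3 + (C * B) * δ ^ 2 + (C * K) * δ + C * δ ^ 3
      + 2 * (C * B) * δ * |X| + 3 * c7 * δ ^ 2 * |X| := by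
    refine habs.trans ?_
    gcongr
  have hlow : c6 * K * |X| ≤ |b1 a| * |X| := by gcongr
  have hX := abs_nonneg X
  have t1 : ((C + 3 * c7) * δ ^ 2 + 2 * C * B * δ) * |X| ≤ c6 / 2 * K * |X| := by gcongr
  have t2 : ((C + 3 * c7) * δ ^ 2 + 2 * C * B * δ) * δ ≤ c6 / 2 * K * δ := by gcongr
  have t3 : 0 ≤ C * δ ^ 2 * |X| := by positivity
  have t4 : 0 ≤ c7 * δ ^ 3 := by positivity
  have t5 : 0 ≤ C * B * δ ^ 2 := by positivity
  have t6 : (c6 / 2 * K) * |X| ≤ (c6 / 2 * K) * ((1 + 2 * C / c6) * δ) := by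
    have : (c6 / 2 * K) * ((1 + 2 * C / c6) * δ) = c6 / 2 * K * δ + C * K * δ := by
      field_simp
    rw [this]
    linarith
  exact le_of_mul_le_mul_left t6 (by positivity)
end

section
/- Let b3 and c0, c1, c2, c3 be real functions on a bounded closed set Π ⊂ ℝ, continuously differentiable in a, and consider the real cubic equation b3(a) u³ + ε0³ c2(a) u² + ε0² c1(a) u + ε0 c0(a) = 0. Assume there are positive constants c, c', M with inf_{a∈Π} |b3(a)| ≥ c, inf_{a∈Π} |c0(a)| ≥ c', and |‖b3|‖_Π, |‖cj|‖_Π ≤ M for j = 0,1,2. Then for ε0 sufficiently small the equation has a real root w10(a), continuously differentiable in a ∈ Π, satisfying w10(a) = −(ε0 c0(a)/b3(a))^{1/3} (1 + O(ε0)); in particular there exist positive constants c4, c5 such that c4 ε0^{1/3} ≤ |w10(a)| ≤ c5 ε0^{1/3} for all a ∈ Π and |‖w10|‖_Π ≤ c5 ε0^{1/3}. -/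
open Real

/-- The real cube root. -/
noncomputable def cbrt (x : ℝ) : ℝ := Real.sign x * |x| ^ ((1 : ℝ) / 3)

theorem phi_exists : ∃ φ : ℝ × ℝ → ℝ, ∃ δ L : ℝ, 0 < δ ∧ 0 < L ∧
    ∀ x : ℝ × ℝ, ‖x‖ < δ → ContDiffAt ℝ 1 φ x ∧
      φ x ^ 3 - x.1 * φ x ^ 2 + x.2 * φ x - 1 = 0 ∧ ‖fderiv ℝ φ x‖ ≤ L ∧ |φ x - 1| ≤ L * ‖x‖ := by
  let f : (ℝ × ℝ) × ℝ → ℝ := fun y => y.2 ^ 3 - y.1.1 * y.2 ^ 2 + y.1.2 * y.2 - 1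
  let u : (ℝ × ℝ) × ℝ := ((0, 0), 1)
  have hf : ContDiff ℝ 1 f := by fun_prop
  have cdf : ContDiffAt ℝ 1 f u := hf.contDiffAt
  have hd : HasDerivAt (fun t : ℝ => f ((0, 0), t)) 3 1 := by
    have : (fun t : ℝ => f ((0, 0), t)) = fun t => t ^ 3 - 1 := by
      funext t; simp [f]
    rw [this]
    have := (hasDerivAt_pow 3 (1 : ℝ)).sub_const 1
    simpa using this
  have hval : (fderiv ℝ f u ∘L ContinuousLinearMap.inr ℝ (ℝ × ℝ) ℝ) 1 = 3 := by
    have h1 : HasFDerivAt f (fderiv ℝ f u) (((0, 0), 1) : (ℝ × ℝ) × ℝ) :=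
      (hf.differentiable (by norm_num) u).hasFDerivAt
    have h2 : HasFDerivAt (fun t : ℝ => (((0, 0), t) : (ℝ × ℝ) × ℝ))
        (ContinuousLinearMap.inr ℝ (ℝ × ℝ) ℝ) 1 := hasFDerivAt_prodMk_right _ _
    have h3 := (HasFDerivAt.comp (1 : ℝ) h1 h2).hasDerivAt
    exact h3.unique hd
  have if₂ : (fderiv ℝ f u ∘L ContinuousLinearMap.inr ℝ (ℝ × ℝ) ℝ).IsInvertible := by
    refine ⟨ContinuousLinearEquiv.smulLeft (Units.mk0 (3 : ℝ) (by norm_num)), ?_⟩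
    ext
    rw [hval]
    simp [Units.smul_def]
  let φ := cdf.implicitFunction one_ne_zero if₂
  have h0 : φ 0 = 1 := cdf.implicitFunction_apply_self one_ne_zero if₂
  have hφ : ContDiffAt ℝ 1 φ 0 := cdf.contDiffAt_implicitFunction one_ne_zero if₂
  have he : ∀ᶠ x in nhds (0 : ℝ × ℝ), f (x, φ x) = f u :=
    cdf.eventually_apply_implicitFunction one_ne_zero if₂
  have hfu : f u = 0 := by simp [f, u]
  have hev : ∀ᶠ x in nhds (0 : ℝ × ℝ), ContDiffAt ℝ 1 φ x := hφ.eventually (by simp)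
  have hfd : ContinuousAt (fderiv ℝ φ) 0 :=
    (hφ.fderiv_right (m := 0) (by norm_num)).continuousAt
  have hbd : ∀ᶠ x in nhds (0 : ℝ × ℝ), ‖fderiv ℝ φ x‖ < ‖fderiv ℝ φ 0‖ + 1 :=
    hfd.norm.eventually_lt continuousAt_const (by simp)
  obtain ⟨δ, hδ, hball⟩ := Metric.eventually_nhds_iff.1 (hev.and (he.and hbd))
  refine ⟨φ, δ, ‖fderiv ℝ φ 0‖ + 1, hδ, by positivity, fun x hx => ?_⟩
  have hx' : dist x 0 < δ := by simpa using hx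
  obtain ⟨a1, a2, a3⟩ := hball hx'
  refine ⟨a1, ?_, a3.le, ?_⟩
  · rw [hfu] at a2; exact a2
  · have := (convex_ball (0 : ℝ × ℝ) δ).norm_image_sub_le_of_norm_fderiv_le (𝕜 := ℝ) (f := φ)
      (C := ‖fderiv ℝ φ 0‖ + 1)
      (fun y hy => ((hball hy).1.differentiableAt (by norm_num)))
      (fun y hy => (hball hy).2.2.le) (Metric.mem_ball_self hδ) hx'
    simpa [h0] using this


theorem cbrt_cube (x : ℝ) : cbrt x ^ 3 = x := by
  unfold cbrt
  have h : (|x| ^ ((1 : ℝ) / 3)) ^ 3 = |x| := by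
    rw [← Real.rpow_natCast, ← Real.rpow_mul (abs_nonneg x)]; norm_num
  rw [mul_pow, h]
  rcases lt_trichotomy x 0 with h | h | h
  · rw [Real.sign_of_neg h, abs_of_neg h]; ring
  · simp [h]
  · rw [Real.sign_of_pos h, abs_of_pos h]; ring

theorem cbrt_scale (e x : ℝ) (he : 0 < e) : cbrt (e * x) = e ^ ((1 : ℝ) / 3) * cbrt x := by
  unfold cbrt
  rw [abs_mul, abs_of_pos he, Real.mul_rpow he.le (abs_nonneg x)]
  have : Real.sign (e * x) = Real.sign x := by
    rcases lt_trichotomy x 0 with h | h | h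
    · rw [Real.sign_of_neg h, Real.sign_of_neg (mul_neg_of_pos_of_neg he h)]
    · simp [h]
    · rw [Real.sign_of_pos h, Real.sign_of_pos (mul_pos he h)]
  rw [this]; ring

theorem cbrt_contDiffAt (x : ℝ) (hx : x ≠ 0) : ContDiffAt ℝ 1 cbrt x := by
  have habs : ContDiffAt ℝ 1 (fun y : ℝ => |y|) x := contDiffAt_abs hx
  have h1 : ContDiffAt ℝ 1 (fun y : ℝ => |y| ^ ((1 : ℝ) / 3)) x :=
    habs.rpow_const_of_ne (abs_ne_zero.2 hx)
  have h2 : ContDiffAt ℝ 1 (fun y : ℝ => Real.sign x * |y| ^ ((1 : ℝ) / 3)) x :=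
    contDiffAt_const.mul h1
  refine h2.congr_of_eventuallyEq ?_
  rcases lt_or_gt_of_ne hx with h | h
  · filter_upwards [eventually_lt_nhds h] with y hy
    simp only [cbrt]; rw [Real.sign_of_neg hy, Real.sign_of_neg h]
  · filter_upwards [eventually_gt_nhds h] with y hy
    simp only [cbrt]; rw [Real.sign_of_pos hy, Real.sign_of_pos h]

theorem c1_bdd {U Pa : Set ℝ} (hU : IsOpen U) (hP : IsCompact Pa) (hPU : Pa ⊆ U) (f : ℝ → ℝ)
    (hf : ContDiffOn ℝ 1 f U) : ∃ B : ℝ, 0 ≤ B ∧ ∀ a ∈ Pa, |f a| ≤ B ∧ |deriv f a| ≤ B := by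
  obtain ⟨B1, h1⟩ := hP.exists_bound_of_continuousOn (hf.continuousOn.mono hPU)
  obtain ⟨B2, h2⟩ := hP.exists_bound_of_continuousOn
    ((hf.continuousOn_deriv_of_isOpen hU le_rfl).mono hPU)
  refine ⟨max 0 (max B1 B2), le_max_left _ _, fun a ha => ⟨?_, ?_⟩⟩
  · exact (h1 a ha).trans ((le_max_left _ _).trans (le_max_right _ _))
  · exact (h2 a ha).trans ((le_max_right _ _).trans (le_max_right _ _))

/-- for the real cubic equation
`b3(a) u³ + ε0³ c2(a) u² + ε0² c1(a) u + ε0 c0(a) = 0` with `|b3| ≥ c`, `|c0| ≥ c'`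
bounded below and all coefficient norms bounded by `M`, for `ε0` small enough there is
a real root `w10(a)`, continuously differentiable in `a`, with
`w10(a) = −(ε0 c0(a)/b3(a))^{1/3}(1 + O(ε0))`, and in particular
`c4 ε0^{1/3} ≤ |w10(a)| ≤ c5 ε0^{1/3}` and `|‖w10|‖_Π ≤ c5 ε0^{1/3}`. -/
theorem cubic_root_order_one_third (c c' M : ℝ) (hc : 0 < c) (hc' : 0 < c') (hM : 0 < M)
    (Pa : Set ℝ) (hPaclosed : IsClosed Pa) (hPabdd : Bornology.IsBounded Pa)
    (b3 c0 c1 c2 : ℝ → ℝ)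
    -- continuous differentiability in a neighborhood of Pa
    (hreg : ∃ U : Set ℝ, IsOpen U ∧ Pa ⊆ U ∧ ContDiffOn ℝ 1 b3 U ∧ ContDiffOn ℝ 1 c0 U ∧
      ContDiffOn ℝ 1 c1 U ∧ ContDiffOn ℝ 1 c2 U)
    (hb3 : ∀ a ∈ Pa, c ≤ |b3 a|)
    (hc0 : ∀ a ∈ Pa, c' ≤ |c0 a|)
    (hbound : ∀ a ∈ Pa,
      |b3 a| ≤ M ∧ |deriv b3 a| ≤ M ∧ |c0 a| ≤ M ∧ |deriv c0 a| ≤ M ∧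
      |c1 a| ≤ M ∧ |deriv c1 a| ≤ M ∧ |c2 a| ≤ M ∧ |deriv c2 a| ≤ M) :
    ∃ ε0star : ℝ, 0 < ε0star ∧ ∃ K c4 c5 : ℝ, 0 < K ∧ 0 < c4 ∧ 0 < c5 ∧
      ∀ ε0 : ℝ, 0 < ε0 → ε0 ≤ ε0star →
      ∃ w10 : ℝ → ℝ,
        (∃ U : Set ℝ, IsOpen U ∧ Pa ⊆ U ∧ ContDiffOn ℝ 1 w10 U) ∧
        (∀ a ∈ Pa, b3 a * w10 a ^ 3 + ε0 ^ 3 * c2 a * w10 a ^ 2 +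
          ε0 ^ 2 * c1 a * w10 a + ε0 * c0 a = 0) ∧
        -- w10 = −(ε0 c0/b3)^{1/3} (1 + O(ε0))
        (∀ a ∈ Pa, |w10 a + cbrt (ε0 * c0 a / b3 a)| ≤ K * ε0 * ε0 ^ ((1 : ℝ) / 3)) ∧
        (∀ a ∈ Pa, c4 * ε0 ^ ((1 : ℝ) / 3) ≤ |w10 a| ∧ |w10 a| ≤ c5 * ε0 ^ ((1 : ℝ) / 3) ∧
          |deriv w10 a| ≤ c5 * ε0 ^ ((1 : ℝ) / 3)) := by
  obtain ⟨U, hU, hPU, rb, r0, r1, r2⟩ := hreg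
  have hPc : IsCompact Pa := Metric.isCompact_of_isClosed_isBounded hPaclosed hPabdd
  obtain ⟨φ, δ, L, hδ, hL, hφ⟩ := phi_exists
  let V : Set ℝ := U ∩ (fun a => b3 a * c0 a) ⁻¹' {0}ᶜ
  have hV : IsOpen V := (rb.mul r0).continuousOn.isOpen_inter_preimage hU isOpen_compl_singleton
  have hPV : Pa ⊆ V := by
    intro a ha
    refine ⟨hPU ha, ?_⟩
    have h1 := hb3 a ha
    have h2 := hc0 a ha
    have h3 : b3 a ≠ 0 := abs_pos.1 (by linarith)
    have h4 : c0 a ≠ 0 := abs_pos.1 (by linarith)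
    exact mul_ne_zero h3 h4
  have hVU : V ⊆ U := Set.inter_subset_left
  have nb : ∀ a ∈ V, b3 a ≠ 0 := fun a ha h => ha.2 (by simp [h])
  have n0 : ∀ a ∈ V, c0 a ≠ 0 := fun a ha h => ha.2 (by simp [h])
  let ρ : ℝ → ℝ := fun a => cbrt (c0 a / b3 a)
  have hρ3 : ∀ a, ρ a ^ 3 = c0 a / b3 a := fun a => cbrt_cube _
  have nρ : ∀ a ∈ V, ρ a ≠ 0 := by
    intro a ha h
    have h1 := hρ3 a
    rw [h] at h1
    exact div_ne_zero (n0 a ha) (nb a ha) (by rw [← h1]; norm_num)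
  have sρ : ContDiffOn ℝ 1 ρ V := by
    intro a ha
    exact (cbrt_contDiffAt _ (div_ne_zero (n0 a ha) (nb a ha))).comp_contDiffWithinAt a
      (((r0.mono hVU).div (rb.mono hVU) nb) a ha)
  let G : ℝ → ℝ := fun a => c2 a / (b3 a * ρ a)
  let H : ℝ → ℝ := fun a => c1 a / (b3 a * ρ a ^ 2)
  have sG : ContDiffOn ℝ 1 G V := (r2.mono hVU).div ((rb.mono hVU).mul sρ)
    (fun a ha => mul_ne_zero (nb a ha) (nρ a ha))
  have sH : ContDiffOn ℝ 1 H V := (r1.mono hVU).div ((rb.mono hVU).mul (sρ.pow 2))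
    (fun a ha => mul_ne_zero (nb a ha) (pow_ne_zero 2 (nρ a ha)))
  obtain ⟨B1, p1, q1⟩ := c1_bdd hV hPc hPV ρ sρ
  obtain ⟨B2, p2, q2⟩ := c1_bdd hV hPc hPV G sG
  obtain ⟨B3, p3, q3⟩ := c1_bdd hV hPc hPV H sH
  obtain ⟨B4, p4, q4⟩ := c1_bdd hV hPc hPV _ (sρ.inv nρ)
  obtain ⟨B, hB, hB1, hB2, hB3, hB4⟩ : ∃ B : ℝ, 0 < B ∧ B1 ≤ B ∧ B2 ≤ B ∧ B3 ≤ B ∧ B4 ≤ B :=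
    ⟨1 + B1 + B2 + B3 + B4, by linarith, by linarith, by linarith, by linarith, by linarith⟩
  refine ⟨min 1 (min (δ / (2 * B)) (1 / (2 * (L * B)))), by positivity, L * B * B, 1 / (2 * B),
    2 * B + B * (L * B), by positivity, by positivity, by positivity, ?_⟩
  intro ε hε hεs
  have hε1 : ε ≤ 1 := hεs.trans (min_le_left _ _)
  have hεδ : ε * B < δ := by
    have h : ε ≤ δ / (2 * B) := hεs.trans ((min_le_right _ _).trans (min_le_left _ _))
    rw [le_div_iff₀ (by positivity)] at h
    nlinarith
  have hεL : L * (ε * B) ≤ 1 / 2 := by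
    have h : ε ≤ 1 / (2 * (L * B)) := hεs.trans ((min_le_right _ _).trans (min_le_right _ _))
    rw [le_div_iff₀ (by positivity)] at h
    nlinarith
  obtain ⟨e, hedef⟩ : ∃ e, e = ε ^ ((1 : ℝ) / 3) := ⟨_, rfl⟩
  have he : 0 < e := by rw [hedef]; positivity
  have he3 : e ^ 3 = ε := by
    rw [hedef, ← Real.rpow_natCast, ← Real.rpow_mul hε.le]; norm_num
  have he1 : e ≤ 1 := by rw [hedef]; exact Real.rpow_le_one hε.le hε1 (by norm_num)
  have hz : e ^ 4 ≤ ε := by rw [← he3]; exact pow_le_pow_of_le_one he.le he1 (by norm_num)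
  have hz2 : e ^ 8 ≤ ε := by rw [← he3]; exact pow_le_pow_of_le_one he.le he1 (by norm_num)
  rw [← hedef]
  let X : ℝ → ℝ × ℝ := fun a => (e ^ 8 * G a, e ^ 4 * H a)
  have sX : ContDiffOn ℝ 1 X V := (contDiffOn_const.mul sG).prodMk (contDiffOn_const.mul sH)
  have key : ∀ u v : ℝ, |u| ≤ B → |v| ≤ B → ‖((e ^ 8 * u, e ^ 4 * v) : ℝ × ℝ)‖ ≤ ε * B := by
    intro u v hu hv
    rw [Prod.norm_def]
    refine max_le ?_ ?_
    · simp only [Real.norm_eq_abs, abs_mul]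
      rw [abs_of_pos (by positivity)]
      exact mul_le_mul hz2 hu (abs_nonneg _) hε.le
    · simp only [Real.norm_eq_abs, abs_mul]
      rw [abs_of_pos (by positivity)]
      exact mul_le_mul hz hv (abs_nonneg _) hε.le
  have hXn : ∀ a ∈ Pa, ‖X a‖ ≤ ε * B := fun a ha =>
    key _ _ ((q2 a ha).1.trans hB2) ((q3 a ha).1.trans hB3)
  let W : Set ℝ := V ∩ X ⁻¹' (Metric.ball 0 δ)
  have hW : IsOpen W := sX.continuousOn.isOpen_inter_preimage hV Metric.isOpen_ball
  have hWX : ∀ a ∈ W, ‖X a‖ < δ := fun a ha => by simpa using ha.2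
  have hPW : Pa ⊆ W := fun a ha => ⟨hPV ha, by
    simpa using (hXn a ha).trans_lt hεδ⟩
  let w : ℝ → ℝ := fun a => -e * (ρ a * φ (X a))
  have sφ : ContDiffOn ℝ 1 (fun a => φ (X a)) W := fun a ha =>
    (hφ _ (hWX a ha)).1.comp_contDiffWithinAt a ((sX.mono Set.inter_subset_left) a ha)
  have sw : ContDiffOn ℝ 1 w W :=
    contDiffOn_const.mul ((sρ.mono Set.inter_subset_left).mul sφ)
  have hφ1 : ∀ a ∈ Pa, |φ (X a) - 1| ≤ L * (ε * B) := fun a ha =>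
    (hφ _ (hWX a (hPW ha))).2.2.2.trans (mul_le_mul_of_nonneg_left (hXn a ha) hL.le)
  have hρB : ∀ a ∈ Pa, |ρ a| ≤ B := fun a ha => (q1 a ha).1.trans hB1
  refine ⟨w, ⟨W, hW, hPW, sw⟩, ?_, ?_, ?_⟩
  · intro a ha
    have heq := (hφ _ (hWX a (hPW ha))).2.1
    have h1 := nb a (hPV ha)
    have h2 := nρ a (hPV ha)
    have h3 := hρ3 a
    have h5 : b3 a * ρ a ^ 3 = c0 a := by rw [h3]; field_simp
    simp only [w]
    generalize φ (X a) = t at heq ⊢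
    have hP : b3 a * ρ a * (X a).1 = e ^ 8 * c2 a := by simp only [X, G]; field_simp
    have hQ : b3 a * ρ a ^ 2 * (X a).2 = e ^ 4 * c1 a := by simp only [X, H]; field_simp
    rw [← he3, ← h5]
    linear_combination (-e ^ 3 * b3 a * ρ a ^ 3) * heq
      - e ^ 3 * ρ a ^ 2 * t ^ 2 * hP + e ^ 3 * ρ a * t * hQ
  · intro a ha
    have h1 : cbrt (ε * c0 a / b3 a) = e * ρ a := by
      rw [mul_div_assoc, cbrt_scale _ _ hε, ← hedef]
    have h2 : w a + cbrt (ε * c0 a / b3 a) = -e * (ρ a * (φ (X a) - 1)) := by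
      rw [h1]; simp only [w]; ring
    rw [h2, abs_mul, abs_mul, abs_neg, abs_of_pos he]
    have h3 := mul_le_mul (hρB a ha) (hφ1 a ha) (abs_nonneg _) hB.le
    calc e * (|ρ a| * |φ (X a) - 1|) ≤ e * (B * (L * (ε * B))) :=
          mul_le_mul_of_nonneg_left h3 he.le
      _ = L * B * B * ε * e := by ring
  · intro a ha
    have hd := abs_le.1 ((hφ1 a ha).trans hεL)
    have hφl : 1 / 2 ≤ |φ (X a)| := le_trans (by linarith [hd.1]) (le_abs_self _)
    have hφu : |φ (X a)| ≤ 2 := abs_le.2 ⟨by linarith [hd.1], by linarith [hd.2]⟩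
    have hρl : 1 / B ≤ |ρ a| := by
      have h := (q4 a ha).1.trans hB4
      change |(ρ a)⁻¹| ≤ B at h
      rw [abs_inv] at h
      have := abs_pos.2 (nρ a (hPV ha))
      rw [inv_le_comm₀ this hB] at h
      rw [one_div]; exact h
    have hwa : |w a| = |ρ a| * |φ (X a)| * e := by
      simp only [w]; rw [abs_mul, abs_mul, abs_neg, abs_of_pos he]; ring
    refine ⟨?_, ?_, ?_⟩
    · rw [hwa]
      refine mul_le_mul_of_nonneg_right ?_ he.le
      calc 1 / (2 * B) = 1 / B * (1 / 2) := by field_simp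
        _ ≤ _ := mul_le_mul hρl hφl (by norm_num) (abs_nonneg _)
    · rw [hwa]
      refine mul_le_mul_of_nonneg_right ?_ he.le
      have := mul_le_mul (hρB a ha) hφu (abs_nonneg _) hB.le
      have : 0 < B * (L * B) := by positivity
      linarith
    · have hVn := hV.mem_nhds (hPV ha)
      have dρ := ((sρ.contDiffAt hVn).differentiableAt (by norm_num)).hasDerivAt
      have dG := ((sG.contDiffAt hVn).differentiableAt (by norm_num)).hasDerivAt
      have dH := ((sH.contDiffAt hVn).differentiableAt (by norm_num)).hasDerivAt
      have dX : HasDerivAt X (e ^ 8 * deriv G a, e ^ 4 * deriv H a) a :=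
        (dG.const_mul (e ^ 8)).prodMk (dH.const_mul (e ^ 4))
      have hp := hφ _ (hWX a (hPW ha))
      have dφ := (hp.1.differentiableAt (by norm_num)).hasFDerivAt.comp_hasDerivAt a dX
      have dw : HasDerivAt w _ a := (dρ.mul dφ).const_mul (-e)
      rw [dw.deriv, abs_mul, abs_neg, abs_of_pos he, mul_comm e]
      refine mul_le_mul_of_nonneg_right ?_ he.le
      refine (abs_add_le _ _).trans ?_
      rw [abs_mul, abs_mul]
      have hY := key _ _ ((q2 a ha).2.trans hB2) ((q3 a ha).2.trans hB3)
      have hY' : ε * B ≤ B := by nlinarith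
      have hF : |fderiv ℝ φ (X a) (e ^ 8 * deriv G a, e ^ 4 * deriv H a)| ≤ L * B :=
        (ContinuousLinearMap.le_opNorm _ _).trans
          (mul_le_mul hp.2.2.1 (hY.trans hY') (norm_nonneg _) hL.le)
      have t1 := mul_le_mul ((q1 a ha).2.trans hB1) hφu (abs_nonneg _) hB.le
      have t2 := mul_le_mul (hρB a ha) hF (abs_nonneg _) hB.le
      simp only [Function.comp_apply]
      linarith
end

section
/- There exists a constant μ > 0 such that for every a ∈ [1/4, 5/4], every root λ ∈ ℂ of the characteristic equation λ² − aλ + 1 − e^{−τ0(a) λ} = 0 other than λ = 0 and λ = ± i ω0(a) satisfies Re λ ≤ −μ. -/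
open Real Complex

/-- `ω0(a) = √(2 - a²)`. -/
noncomputable def omega0 (a : ℝ) : ℝ := Real.sqrt (2 - a ^ 2)

/-- The critical delay `τ0(a)`. -/
noncomputable def tau0 (a : ℝ) : ℝ :=
  if 1 < a then Real.arcsin (a * omega0 a) / omega0 a
  else (Real.pi - Real.arcsin (a * omega0 a)) / omega0 a

lemma params (a : ℝ) (ha : a ∈ Set.Icc (1 / 4 : ℝ) (5 / 4)) :
    0 < Real.arccos (a / √2) ∧ Real.arccos (a / √2) < π / 2 ∧
    a = √2 * Real.cos (Real.arccos (a / √2)) ∧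
    omega0 a = √2 * Real.sin (Real.arccos (a / √2)) ∧
    0 < omega0 a ∧
    tau0 a = 2 * Real.arccos (a / √2) / omega0 a := by
  obtain ⟨h1, h2⟩ := ha
  have hs : (0:ℝ) < √2 := by positivity
  have hs2 : √2 * √2 = 2 := Real.mul_self_sqrt (by norm_num)
  have hs3 : 5 / 4 < √2 := by
    apply Real.lt_sqrt_of_sq_lt; norm_num
  have hlt : a / √2 < 1 := by rw [div_lt_one hs]; linarith
  have hpos : 0 < a / √2 := by positivity
  set φ := Real.arccos (a / √2) with hφ
  have hφ0 : 0 < φ := Real.arccos_pos.mpr hlt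
  have hφ1 : φ < π / 2 := Real.arccos_lt_pi_div_two.mpr hpos
  have hcos : Real.cos φ = a / √2 := Real.cos_arccos (by linarith) hlt.le
  have hac : a = √2 * Real.cos φ := by rw [hcos]; field_simp
  have hsin : 0 < Real.sin φ := Real.sin_pos_of_pos_of_lt_pi hφ0 (by linarith)
  have hom : omega0 a = √2 * Real.sin φ := by
    unfold omega0
    rw [Real.sqrt_eq_iff_mul_self_eq_of_pos (by positivity)]
    have := Real.sin_sq_add_cos_sq φ
    have h3 : a ^ 2 = 2 * Real.cos φ ^ 2 := by rw [hac]; nlinarith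
    nlinarith
  have hom0 : 0 < omega0 a := by rw [hom]; positivity
  refine ⟨hφ0, hφ1, hac, hom, hom0, ?_⟩
  have hao : a * omega0 a = Real.sin (2 * φ) := by
    rw [hom, Real.sin_two_mul]
    conv_lhs => rw [hac]
    linear_combination (Real.cos φ * Real.sin φ) * hs2
  have hc2 : Real.cos (2 * φ) = a ^ 2 - 1 := by
    rw [Real.cos_two_mul, hac]
    linear_combination (-Real.cos φ ^ 2) * hs2
  unfold tau0
  rw [hao]
  split_ifs with h
  · have : 2 * φ ≤ π / 2 := by
      by_contra hcon
      push Not at hcon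
      have := Real.cos_neg_of_pi_div_two_lt_of_lt hcon (by linarith)
      nlinarith
    rw [Real.arcsin_sin (by linarith) this]
  · have : π / 2 ≤ 2 * φ := by
      by_contra hcon
      push Not at hcon
      have := Real.cos_pos_of_mem_Ioo (x := 2 * φ) ⟨by linarith, hcon⟩
      nlinarith
    rw [← Real.sin_pi_sub, Real.arcsin_sin (by linarith) (by linarith)]
    ring

/-- basic inequalities -/
lemma facts (a : ℝ) (ha : a ∈ Set.Icc (1 / 4 : ℝ) (5 / 4)) :
    0 < tau0 a ∧ tau0 a * √2 < π ∧ tau0 a * a < 2 ∧ a < tau0 a ∧ omega0 a ^ 2 = 2 - a ^ 2 ∧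
    Real.sin (tau0 a * omega0 a) = a * omega0 a ∧ Real.cos (tau0 a * omega0 a) = a ^ 2 - 1 ∧
    tau0 a * omega0 a < π := by
  obtain ⟨h0, h1, hac, hom, hom0, ht⟩ := params a ha
  set φ := Real.arccos (a / √2) with hφ
  have hs : (0:ℝ) < √2 := by positivity
  have hs2 : √2 * √2 = 2 := Real.mul_self_sqrt (by norm_num)
  have htw : tau0 a * omega0 a = 2 * φ := by rw [ht]; field_simp
  have hsin : 0 < Real.sin φ := Real.sin_pos_of_pos_of_lt_pi h0 (by linarith)
  have hcos : 0 < Real.cos φ := Real.cos_pos_of_mem_Ioo ⟨by linarith, h1⟩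
  have hsc := Real.sin_sq_add_cos_sq φ
  have ht0 : 0 < tau0 a := by rw [ht]; positivity
  have hao : a * omega0 a = Real.sin (2 * φ) := by
    rw [hom, Real.sin_two_mul]
    conv_lhs => rw [hac]
    linear_combination (Real.cos φ * Real.sin φ) * hs2
  have hc2 : Real.cos (2 * φ) = a ^ 2 - 1 := by
    rw [Real.cos_two_mul, hac]
    linear_combination (-Real.cos φ ^ 2) * hs2
  refine ⟨ht0, ?_, ?_, ?_, ?_, ?_, ?_, ?_⟩
  · have := Real.mul_lt_sin h0 h1
    rw [ht, hom, div_mul_eq_mul_div, div_lt_iff₀ (by positivity)]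
    have h3 : 2 * φ < π * Real.sin φ := by
      rw [div_mul_eq_mul_div, div_lt_iff₀ Real.pi_pos] at this
      linarith
    nlinarith
  · have := Real.lt_tan h0 h1
    rw [Real.tan_eq_sin_div_cos, lt_div_iff₀ hcos] at this
    rw [ht, div_mul_eq_mul_div, div_lt_iff₀ hom0, hom]
    conv_lhs => rw [hac]
    nlinarith
  · have := Real.sin_lt (x := 2 * φ) (by linarith)
    rw [ht, lt_div_iff₀ hom0]
    linarith
  · rw [hom, hac]
    linear_combination (Real.sin φ ^2 + Real.cos φ ^2) * hs2 + 2 * hsc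
  · rw [htw, hao]
  · rw [htw, hc2]
  · rw [htw]; linarith

lemma root_integral (a τ x y : ℝ) (hne : (⟨x, y⟩ : ℂ) ≠ 0)
    (h : (⟨x, y⟩ : ℂ) ^ 2 - (a : ℂ) * ⟨x, y⟩ + 1 - Complex.exp (-(τ : ℂ) * ⟨x, y⟩) = 0) :
    (∫ s in (0:ℝ)..τ, Real.exp (-(x * s)) * Real.cos (y * s)) = a - x ∧
    (∫ s in (0:ℝ)..τ, Real.exp (-(x * s)) * Real.sin (y * s)) = y := by
  have h1 := integral_exp_mul_complex (a := 0) (b := τ) (c := -(⟨x, y⟩ : ℂ)) (neg_ne_zero.mpr hne)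
  have h2 : (∫ s in (0:ℝ)..τ, Complex.exp (-(⟨x, y⟩ : ℂ) * s)) = a - ⟨x, y⟩ := by
    rw [h1, div_eq_iff (neg_ne_zero.mpr hne)]
    have : -(⟨x, y⟩ : ℂ) * τ = -(τ : ℂ) * ⟨x, y⟩ := by ring
    rw [this]
    simp only [ofReal_zero, mul_zero, Complex.exp_zero]
    linear_combination -h
  have hint : IntervalIntegrable (fun s : ℝ => Complex.exp (-(⟨x, y⟩ : ℂ) * s))
      MeasureTheory.volume 0 τ := by
    apply Continuous.intervalIntegrable; fun_prop
  have hre := Complex.reCLM.intervalIntegral_comp_comm hint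
  have him := Complex.imCLM.intervalIntegral_comp_comm hint
  rw [h2] at hre him
  constructor
  · simpa [Complex.exp_re, neg_mul, Real.cos_neg] using hre
  · have : (∫ s in (0:ℝ)..τ, -(Real.exp (-(x * s)) * Real.sin (y * s))) = -y := by
      simpa [Complex.exp_im, neg_mul] using him
    rw [intervalIntegral.integral_neg] at this
    linarith

lemma int_s_cos (ω m : ℝ) (hω : 0 < ω) :
    (∫ s in (0:ℝ)..m, s * Real.cos (ω * s)) =
      m * Real.sin (ω * m) / ω - (1 - Real.cos (ω * m)) / ω ^ 2 := by
  have : ∀ s ∈ Set.uIcc 0 m, HasDerivAt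
      (fun s => s * Real.sin (ω * s) / ω - (1 - Real.cos (ω * s)) / ω ^ 2)
      (s * Real.cos (ω * s)) s := by
    intro s _
    have hl : HasDerivAt (fun s : ℝ => ω * s) ω s := by
      simpa using (hasDerivAt_id s).const_mul ω
    have h1 := ((((hasDerivAt_id s).mul hl.sin).div_const ω).sub
      ((hl.cos.const_sub 1).div_const (ω ^ 2)))
    refine HasDerivAt.congr_deriv h1 ?_
    simp only [id]
    field_simp
    ring
  rw [intervalIntegral.integral_eq_sub_of_hasDerivAt this]
  · simp
  · apply Continuous.intervalIntegrable; fun_prop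

lemma no_pos (a : ℝ) (ha : a ∈ Set.Icc (1 / 4 : ℝ) (5 / 4)) (x y : ℝ) (hx : 0 < x) (hy : 0 ≤ y)
    (h : (⟨x, y⟩ : ℂ) ^ 2 - (a : ℂ) * ⟨x, y⟩ + 1 - Complex.exp (-(tau0 a : ℂ) * ⟨x, y⟩) = 0) :
    False := by
  obtain ⟨-, -, -, -, hom0, -⟩ := params a ha
  obtain ⟨ht0, htpi, hta, -, how, hsin, hcos, hltpi⟩ := facts a ha
  set τ := tau0 a
  set ω := omega0 a
  have hne : (⟨x, y⟩ : ℂ) ≠ 0 := by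
    intro h0
    have := congrArg Complex.re h0
    simp at this; linarith
  obtain ⟨hR, hI⟩ := root_integral a τ x y hne h
  have hcosint : (∫ s in (0:ℝ)..τ, Real.cos (ω * s)) = a := by
    rw [intervalIntegral.integral_comp_mul_left (fun s => Real.cos s) hom0.ne']
    simp only [integral_cos, mul_zero, Real.sin_zero, sub_zero, smul_eq_mul]
    rw [mul_comm ω τ, hsin]; field_simp
  have hsinint : (∫ s in (0:ℝ)..τ, Real.sin (ω * s)) = ω := by
    rw [intervalIntegral.integral_comp_mul_left (fun s => Real.sin s) hom0.ne']
    simp only [integral_sin, mul_zero, Real.cos_zero, smul_eq_mul]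
    rw [mul_comm ω τ, hcos]; field_simp; linarith
  rcases le_or_gt y ω with hyω | hyω
  · -- real part
    have hstep1 : (∫ s in (0:ℝ)..τ, Real.exp (-(x * s)) * Real.cos (ω * s)) ≤ a - x := by
      rw [← hR]
      apply intervalIntegral.integral_mono_on ht0.le
      · apply Continuous.intervalIntegrable; fun_prop
      · apply Continuous.intervalIntegrable; fun_prop
      · intro s hs
        apply mul_le_mul_of_nonneg_left _ (Real.exp_pos _).le
        apply Real.cos_le_cos_of_nonneg_of_le_pi (mul_nonneg hy hs.1)
        · nlinarith [hs.1, hs.2]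
        · exact mul_le_mul_of_nonneg_right hyω hs.1
    have hstep2 : x ≤ ∫ s in (0:ℝ)..τ, (1 - Real.exp (-(x * s))) * Real.cos (ω * s) := by
      have : (∫ s in (0:ℝ)..τ, (1 - Real.exp (-(x * s))) * Real.cos (ω * s)) =
        (∫ s in (0:ℝ)..τ, Real.cos (ω * s)) -
          ∫ s in (0:ℝ)..τ, Real.exp (-(x * s)) * Real.cos (ω * s) := by
        rw [← intervalIntegral.integral_sub]
        · congr 1; ext s; ring
        · apply Continuous.intervalIntegrable; fun_prop
        · apply Continuous.intervalIntegrable; fun_prop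
      rw [this, hcosint]; linarith
    have hm : ∀ m, 0 ≤ m → ω * m ≤ π / 2 →
        (∫ s in (0:ℝ)..m, (1 - Real.exp (-(x * s))) * Real.cos (ω * s)) ≤
        x * (m * Real.sin (ω * m) / ω - (1 - Real.cos (ω * m)) / ω ^ 2) := by
      intro m hm0 hm1
      rw [← int_s_cos ω m hom0, ← intervalIntegral.integral_const_mul]
      apply intervalIntegral.integral_mono_on hm0
      · apply Continuous.intervalIntegrable; fun_prop
      · apply Continuous.intervalIntegrable; fun_prop
      · intro s hs
        rw [← mul_assoc]
        apply mul_le_mul_of_nonneg_right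
        · have := Real.add_one_le_exp (-(x * s)); linarith
        · apply Real.cos_nonneg_of_mem_Icc
          have h3 : 0 ≤ ω * s := mul_nonneg hom0.le hs.1
          have h4 : ω * s ≤ ω * m := mul_le_mul_of_nonneg_left hs.2 hom0.le
          constructor <;> linarith [Real.pi_pos]
    rcases le_or_gt (ω * τ) (π / 2) with hc | hc
    · have := hm τ ht0.le hc
      rw [mul_comm ω τ, hsin, hcos] at this
      have e : τ * (a * ω) / ω - (1 - (a ^ 2 - 1)) / ω ^ 2 = τ * a - 1 := by
        have : 1 - (a ^ 2 - 1) = ω ^ 2 := by linarith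
        rw [this]; field_simp
      rw [e] at this
      nlinarith
    · have hω1 : 1 ≤ ω ^ 2 := by
        have := Real.cos_neg_of_pi_div_two_lt_of_lt hc (by linarith [Real.pi_pos])
        rw [mul_comm, hcos] at this
        linarith
      set m := π / 2 / ω with hmdef
      have hωm : ω * m = π / 2 := by rw [hmdef]; field_simp <;> ring
      have hm0 : 0 ≤ m := by rw [hmdef]; have := Real.pi_pos; positivity
      have hmτ : m ≤ τ := by
        rw [hmdef, div_le_iff₀ hom0]; linarith
      have h1 := hm m hm0 hωm.le
      have h2 : (∫ s in m..τ, (1 - Real.exp (-(x * s))) * Real.cos (ω * s)) ≤ 0 := by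
        have : (∫ s in m..τ, (1 - Real.exp (-(x * s))) * Real.cos (ω * s)) ≤
            ∫ s in m..τ, (0:ℝ) := by
          apply intervalIntegral.integral_mono_on hmτ
          · apply Continuous.intervalIntegrable; fun_prop
          · simp
          · intro s hs
            apply mul_nonpos_of_nonneg_of_nonpos
            · have : Real.exp (-(x * s)) ≤ 1 := by
                apply Real.exp_le_one_iff.mpr
                have := mul_nonneg hx.le (hm0.trans hs.1)
                linarith
              linarith
            · apply Real.cos_nonpos_of_pi_div_two_le_of_le
              · rw [← hωm]; exact mul_le_mul_of_nonneg_left hs.1 hom0.le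
              · have := mul_le_mul_of_nonneg_left hs.2 hom0.le
                linarith [Real.pi_pos]
        simpa using this
      have h3 : (∫ s in (0:ℝ)..m, (1 - Real.exp (-(x * s))) * Real.cos (ω * s)) +
          (∫ s in m..τ, (1 - Real.exp (-(x * s))) * Real.cos (ω * s)) =
          ∫ s in (0:ℝ)..τ, (1 - Real.exp (-(x * s))) * Real.cos (ω * s) := by
        apply intervalIntegral.integral_add_adjacent_intervals
        · apply Continuous.intervalIntegrable; fun_prop
        · apply Continuous.intervalIntegrable; fun_prop
      rw [hωm, Real.sin_pi_div_two, Real.cos_pi_div_two] at h1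
      have e : m * 1 / ω - (1 - 0) / ω ^ 2 = (π / 2 - 1) / ω ^ 2 := by
        rw [hmdef]; field_simp <;> ring
      have e2 : (π / 2 - 1) / ω ^ 2 < 1 := by
        rw [div_lt_one (by positivity)]
        linarith [Real.pi_lt_four]
      rw [e] at h1
      nlinarith
  · rcases le_or_gt (y * τ) π with hc | hc
    · have hy0 : 0 < y := hom0.trans hyω
      have hlt : (∫ s in (0:ℝ)..τ, Real.exp (-(x * s)) * Real.sin (y * s)) <
          ∫ s in (0:ℝ)..τ, (y / ω) * Real.sin (ω * s) := by
        have key : ∀ s, 0 ≤ s → s ≤ τ → 0 ≤ Real.sin (y * s) ∧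
            Real.sin (y * s) ≤ (y / ω) * Real.sin (ω * s) := by
          intro s hs0 hs1
          have hys : y * s ≤ π := (mul_le_mul_of_nonneg_left hs1 hy0.le).trans hc
          have hys0 : 0 ≤ y * s := mul_nonneg hy0.le hs0
          refine ⟨Real.sin_nonneg_of_nonneg_of_le_pi hys0 hys, ?_⟩
          have hw0 : 0 ≤ ω / y := by positivity
          have hw1 : 0 ≤ 1 - ω / y := by
            rw [sub_nonneg, div_le_one hy0]; exact hyω.le
          have hm1 : y * s ∈ Set.Icc 0 π := ⟨hys0, hys⟩
          have hm2 : (0:ℝ) ∈ Set.Icc 0 π := ⟨le_rfl, Real.pi_pos.le⟩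
          have hconc := strictConcaveOn_sin_Icc.concaveOn.2 hm1 hm2 hw0 hw1 (by ring)
          simp only [smul_eq_mul, Real.sin_zero, mul_zero, add_zero] at hconc
          have e : ω / y * (y * s) = ω * s := by field_simp
          rw [e] at hconc
          rw [div_mul_eq_mul_div, le_div_iff₀ hom0]
          rw [div_mul_eq_mul_div, div_le_iff₀ hy0] at hconc
          linarith
        apply intervalIntegral.integral_lt_integral_of_continuousOn_of_le_of_exists_lt ht0
        · apply Continuous.continuousOn; fun_prop
        · apply Continuous.continuousOn; fun_prop
        · intro s hs
          obtain ⟨k1, k2⟩ := key s hs.1.le hs.2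
          have : Real.exp (-(x * s)) ≤ 1 := by
            apply Real.exp_le_one_iff.mpr
            have := mul_nonneg hx.le hs.1.le
            linarith
          nlinarith
        · refine ⟨τ / 2, ⟨by linarith, by linarith⟩, ?_⟩
          obtain ⟨k1, k2⟩ := key (τ / 2) (by linarith) (by linarith)
          have h5 : Real.exp (-(x * (τ / 2))) < 1 := by
            rw [Real.exp_lt_one_iff]
            have : 0 < x * (τ / 2) := by positivity
            linarith
          have h6 : 0 < Real.sin (y * (τ / 2)) := by
            apply Real.sin_pos_of_pos_of_lt_pi (by positivity)
            linarith [Real.pi_pos]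
          nlinarith
      rw [hI, intervalIntegral.integral_const_mul, hsinint, div_mul_cancel₀ _ hom0.ne'] at hlt
      exact lt_irrefl _ hlt
    · -- modulus
      have hprod : (⟨x, y⟩ : ℂ) * (⟨x, y⟩ - a) = Complex.exp (-(τ : ℂ) * ⟨x, y⟩) - 1 := by
        linear_combination h
      have hn : ‖(⟨x, y⟩ : ℂ) * (⟨x, y⟩ - a)‖ ≤ 2 := by
        rw [hprod]
        refine (norm_sub_le _ _).trans ?_
        rw [Complex.norm_exp, norm_one]
        have : Real.exp ((-(τ : ℂ) * ⟨x, y⟩).re) ≤ 1 := by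
          apply Real.exp_le_one_iff.mpr
          have : 0 ≤ τ * x := by positivity
          simpa using this
        linarith
      rw [norm_mul] at hn
      have n1 : y ≤ ‖(⟨x, y⟩ : ℂ)‖ := by
        have := Complex.abs_im_le_norm (⟨x, y⟩ : ℂ)
        exact (le_abs_self _).trans this
      have n2 : y ≤ ‖(⟨x, y⟩ - a : ℂ)‖ := by
        have := Complex.abs_im_le_norm (⟨x, y⟩ - a : ℂ)
        refine le_trans ?_ this
        simpa using le_abs_self y
      have hyy : y * y ≤ 2 := (mul_le_mul n1 n2 hy (norm_nonneg _)).trans hn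
      have : √2 < y := by
        by_contra hcon
        push Not at hcon
        nlinarith
      have hs2 : √2 * √2 = 2 := Real.mul_self_sqrt (by norm_num)
      nlinarith [Real.sqrt_nonneg 2]

lemma roots_nonneg (a : ℝ) (ha : a ∈ Set.Icc (1 / 4 : ℝ) (5 / 4)) (lam : ℂ) (hre : 0 ≤ lam.re)
    (h : lam ^ 2 - (a : ℂ) * lam + 1 - Complex.exp (-(tau0 a : ℂ) * lam) = 0) :
    lam = 0 ∨ lam = Complex.I * (omega0 a : ℂ) ∨ lam = -(Complex.I * (omega0 a : ℂ)) := by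
  obtain ⟨x, y⟩ := lam
  simp only at hre
  rcases hre.eq_or_lt with hx | hx
  · subst hx
    obtain ⟨-, -, -, -, how, -⟩ := facts a ha
    have h1 := congrArg Complex.re h
    have h2 := congrArg Complex.im h
    simp [Complex.exp_re, Complex.exp_im, pow_two] at h1 h2
    have hsc := Real.sin_sq_add_cos_sq (tau0 a * y)
    have e : y ^ 2 * ((y - omega0 a) * (y + omega0 a)) = 0 := by
      have e1 : Real.cos (tau0 a * y) = 1 - y * y := by linarith
      have e2 : Real.sin (tau0 a * y) = a * y := by linarith
      rw [e1, e2] at hsc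
      linear_combination hsc - y ^ 2 * how
    rcases mul_eq_zero.mp e with e | e
    · left
      have : y = 0 := by simpa using e
      subst this; rfl
    · right
      rcases mul_eq_zero.mp e with e | e
      · left
        apply Complex.ext <;> simp; linarith
      · right
        apply Complex.ext <;> simp; linarith
  · exfalso
    rcases le_total 0 y with hy | hy
    · exact no_pos a ha x y hx hy h
    · apply no_pos a ha x (-y) hx (by linarith)
      have hc := congrArg (starRingEnd ℂ) h
      have e : (⟨x, -y⟩ : ℂ) = starRingEnd ℂ ⟨x, y⟩ := rfl
      rw [e]
      simpa [← Complex.exp_conj] using hc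

lemma tau0_contOn : ContinuousOn tau0 (Set.Icc (1 / 4 : ℝ) (5 / 4)) := by
  have : ContinuousOn (fun a => 2 * Real.arccos (a / √2) / omega0 a)
      (Set.Icc (1 / 4 : ℝ) (5 / 4)) := by
    apply ContinuousOn.div
    · apply Continuous.continuousOn
      exact continuous_const.mul (Real.continuous_arccos.comp (continuous_id.div_const _))
    · apply Continuous.continuousOn
      unfold omega0; fun_prop
    · intro a ha
      exact (params a ha).2.2.2.2.1.ne'
  exact this.congr fun a ha => (params a ha).2.2.2.2.2

lemma simple_roots (a : ℝ) (ha : a ∈ Set.Icc (1 / 4 : ℝ) (5 / 4)) (lam : ℂ)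
    (h : lam = 0 ∨ lam = Complex.I * (omega0 a : ℂ) ∨ lam = -(Complex.I * (omega0 a : ℂ))) :
    lam ^ 2 - (a : ℂ) * lam + 1 - Complex.exp (-(tau0 a : ℂ) * lam) = 0 ∧
    lam + lam - a + tau0 a * Complex.exp (-(tau0 a : ℂ) * lam) ≠ 0 := by
  obtain ⟨-, -, -, -, hom0, -⟩ := params a ha
  obtain ⟨ht0, htpi, hta, hat, how, hsin, hcos, hltpi⟩ := facts a ha
  rcases h with h | h | h
  · subst h
    constructor
    · simp
    · intro h
      have := congrArg Complex.re h
      simp at this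
      linarith
  · subst h
    constructor
    · apply Complex.ext
      · simp [Complex.exp_re, pow_two, hcos]; linarith
      · simp [Complex.exp_im, pow_two, hsin]
    · intro h
      have := congrArg Complex.im h
      simp [Complex.exp_im, hsin] at this
      nlinarith
  · subst h
    constructor
    · apply Complex.ext
      · simp [Complex.exp_re, pow_two, hcos]; linarith
      · simp [Complex.exp_im, pow_two, hsin]
    · intro h
      have := congrArg Complex.im h
      simp [Complex.exp_im, hsin] at this
      nlinarith

open Filter Topology in
lemma local_unique (A : ℝ) (L : ℂ) (u : ℕ → ℝ) (l v : ℕ → ℂ)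
    (hA : A ∈ Set.Icc (1 / 4 : ℝ) (5 / 4)) (hu : ∀ n, u n ∈ Set.Icc (1 / 4 : ℝ) (5 / 4))
    (hul : Tendsto u atTop (𝓝 A)) (hl : Tendsto l atTop (𝓝 L)) (hv : Tendsto v atTop (𝓝 L))
    (hrl : ∀ n, l n ^ 2 - (u n : ℂ) * l n + 1 - Complex.exp (-(tau0 (u n) : ℂ) * l n) = 0)
    (hrv : ∀ n, v n ^ 2 - (u n : ℂ) * v n + 1 - Complex.exp (-(tau0 (u n) : ℂ) * v n) = 0)
    (hne : ∀ n, l n ≠ v n) :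
    L + L - A + tau0 A * Complex.exp (-(tau0 A : ℂ) * L) = 0 := by
  have ht : Tendsto (fun n => (tau0 (u n) : ℂ)) atTop (𝓝 (tau0 A : ℂ)) := by
    have h1 : Tendsto u atTop (𝓝[Set.Icc (1 / 4 : ℝ) (5 / 4)] A) :=
      tendsto_nhdsWithin_iff.mpr ⟨hul, Eventually.of_forall hu⟩
    exact (Complex.continuous_ofReal.tendsto _).comp ((tau0_contOn A hA).tendsto.comp h1)
  have hu' : Tendsto (fun n => (u n : ℂ)) atTop (𝓝 (A : ℂ)) :=
    (Complex.continuous_ofReal.tendsto _).comp hul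
  have hg : ContinuousAt (dslope Complex.exp 0) 0 :=
    continuousAt_dslope_same.mpr Complex.differentiable_exp.differentiableAt
  have hg0 : dslope Complex.exp 0 0 = 1 := by simp
  have hz : Tendsto (fun n => -(tau0 (u n) : ℂ) * (l n - v n)) atTop (𝓝 0) := by
    have := ht.neg.mul (hl.sub hv)
    simpa using this
  have hgz : Tendsto (fun n => dslope Complex.exp 0 (-(tau0 (u n) : ℂ) * (l n - v n)))
      atTop (𝓝 1) := by
    have := hg.tendsto.comp hz
    rwa [hg0] at this
  have hev : Tendsto (fun n => Complex.exp (-(tau0 (u n) : ℂ) * v n)) atTop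
      (𝓝 (Complex.exp (-(tau0 A : ℂ) * L))) :=
    (Complex.continuous_exp.tendsto _).comp (ht.neg.mul hv)
  have hlim := ((hl.add hv).sub hu').add ((ht.mul hev).mul hgz)
  have hzero : ∀ n, l n + v n - u n + tau0 (u n) * Complex.exp (-(tau0 (u n) : ℂ) * v n) *
      dslope Complex.exp 0 (-(tau0 (u n) : ℂ) * (l n - v n)) = 0 := by
    intro n
    have h1 := sub_smul_dslope Complex.exp 0 (-(tau0 (u n) : ℂ) * (l n - v n))
    simp only [sub_zero, smul_eq_mul, Complex.exp_zero] at h1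
    have h2 : Complex.exp (-(tau0 (u n) : ℂ) * l n) =
        Complex.exp (-(tau0 (u n) : ℂ) * v n) *
          Complex.exp (-(tau0 (u n) : ℂ) * (l n - v n)) := by
      rw [← Complex.exp_add]; congr 1; ring
    have h3 := hrl n
    rw [h2] at h3
    apply (mul_eq_zero.mp _).resolve_left (sub_ne_zero.mpr (hne n))
    linear_combination h3 - hrv n - Complex.exp (-(tau0 (u n) : ℂ) * v n) * h1
  have := tendsto_nhds_unique hlim (tendsto_const_nhds.congr fun n => (hzero n).symm)
  simpa using this

open Filter Topology in
/-- there is `μ > 0` such that for all `a ∈ [1/4, 5/4]`, every root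
of the characteristic equation `λ² − aλ + 1 − e^{−τ0(a) λ} = 0` other than `0` and
`± i ω0(a)` has real part `≤ −μ`. -/
theorem characteristic_roots_spectral_gap :
    ∃ μ : ℝ, 0 < μ ∧ ∀ a ∈ Set.Icc (1 / 4 : ℝ) (5 / 4), ∀ lam : ℂ,
      lam ^ 2 - (a : ℂ) * lam + 1 - Complex.exp (-(tau0 a : ℂ) * lam) = 0 →
      lam ≠ 0 → lam ≠ Complex.I * (omega0 a : ℂ) → lam ≠ -(Complex.I * (omega0 a : ℂ)) →
      lam.re ≤ -μ := by
  by_contra hcon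
  push Not at hcon
  have hcon' : ∀ n : ℕ, ∃ p : ℝ × ℂ, p.1 ∈ Set.Icc (1 / 4 : ℝ) (5 / 4) ∧
      p.2 ^ 2 - (p.1 : ℂ) * p.2 + 1 - Complex.exp (-(tau0 p.1 : ℂ) * p.2) = 0 ∧
      p.2 ≠ 0 ∧ p.2 ≠ Complex.I * (omega0 p.1 : ℂ) ∧ p.2 ≠ -(Complex.I * (omega0 p.1 : ℂ)) ∧
      -(1 / ((n : ℝ) + 1)) < p.2.re := by
    intro n
    obtain ⟨a, ha, lam, h1, h2, h3, h4, h5⟩ := hcon (1 / ((n : ℝ) + 1)) (by positivity)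
    exact ⟨(a, lam), ha, h1, h2, h3, h4, h5⟩
  choose p hp1 hp2 hp3 hp4 hp5 hp6 using hcon'
  have hbound : ∀ n, p n ∈ Set.Icc (1 / 4 : ℝ) (5 / 4) ×ˢ Metric.closedBall (0 : ℂ) 100 := by
    intro n
    refine ⟨hp1 n, ?_⟩
    rw [mem_closedBall_zero_iff]
    obtain ⟨ht0, htpi, -⟩ := facts _ (hp1 n)
    have hs1 : (1:ℝ) ≤ √2 := by
      apply Real.le_sqrt_of_sq_le; norm_num
    have ht4 : tau0 (p n).1 ≤ 4 := by nlinarith [Real.pi_lt_four]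
    have hre : -1 ≤ (p n).2.re := by
      have h1 := hp6 n
      have h2 : 1 / ((n : ℝ) + 1) ≤ 1 := by
        rw [div_le_one (by positivity)]
        linarith [Nat.cast_nonneg (α := ℝ) n]
      linarith
    have hexp : ‖Complex.exp (-(tau0 (p n).1 : ℂ) * (p n).2)‖ ≤ 81 := by
      rw [Complex.norm_exp]
      have h1 : (-(tau0 (p n).1 : ℂ) * (p n).2).re ≤ 4 := by
        simp
        nlinarith
      refine (Real.exp_le_exp.mpr h1).trans ?_
      have h3 : Real.exp 1 ≤ 3 := by linarith [Real.exp_one_lt_d9]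
      have h4 : Real.exp 4 = Real.exp 1 ^ 4 := by rw [← Real.exp_nat_mul]; norm_num
      rw [h4]
      calc Real.exp 1 ^ 4 ≤ 3 ^ 4 := by gcongr
        _ = 81 := by norm_num
    have heq : (p n).2 ^ 2 = ((p n).1 : ℂ) * (p n).2 - 1 +
        Complex.exp (-(tau0 (p n).1 : ℂ) * (p n).2) := by
      linear_combination hp2 n
    have hn : ‖(p n).2‖ ^ 2 ≤ 5 / 4 * ‖(p n).2‖ + 1 + 81 := by
      rw [← norm_pow, heq]
      refine (norm_add_le _ _).trans (add_le_add ((norm_sub_le _ _).trans ?_) hexp)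
      rw [norm_mul, norm_one, Complex.norm_real, Real.norm_eq_abs,
        abs_of_pos (by linarith [(hp1 n).1])]
      have := mul_le_mul_of_nonneg_right (hp1 n).2 (norm_nonneg (p n).2)
      linarith
    by_contra hlt
    push Not at hlt
    nlinarith
  obtain ⟨q, hq, σ, hσ, hlim⟩ :=
    (isCompact_Icc.prod (isCompact_closedBall (0 : ℂ) 100)).tendsto_subseq hbound
  have hA : q.1 ∈ Set.Icc (1 / 4 : ℝ) (5 / 4) := hq.1
  have hu : Tendsto (fun n => (p (σ n)).1) atTop (𝓝 q.1) :=
    (continuous_fst.tendsto q).comp hlim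
  have hl : Tendsto (fun n => (p (σ n)).2) atTop (𝓝 q.2) :=
    (continuous_snd.tendsto q).comp hlim
  have hre : 0 ≤ q.2.re := by
    have h1 : Tendsto (fun n => (p (σ n)).2.re) atTop (𝓝 q.2.re) :=
      (Complex.continuous_re.tendsto _).comp hl
    have h2 : Tendsto (fun n : ℕ => -(1 / (((σ n : ℕ) : ℝ) + 1))) atTop (𝓝 0) := by
      have := (tendsto_one_div_add_atTop_nhds_zero_nat (𝕜 := ℝ)).comp hσ.tendsto_atTop
      simpa using this.neg
    exact le_of_tendsto_of_tendsto' h2 h1 fun n => (hp6 (σ n)).le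
  have ht : Tendsto (fun n => (tau0 (p (σ n)).1 : ℂ)) atTop (𝓝 (tau0 q.1 : ℂ)) := by
    have h1 : Tendsto (fun n => (p (σ n)).1) atTop (𝓝[Set.Icc (1 / 4 : ℝ) (5 / 4)] q.1) :=
      tendsto_nhdsWithin_iff.mpr ⟨hu, Eventually.of_forall fun n => hp1 _⟩
    exact (Complex.continuous_ofReal.tendsto _).comp ((tau0_contOn _ hA).tendsto.comp h1)
  have hu' : Tendsto (fun n => ((p (σ n)).1 : ℂ)) atTop (𝓝 (q.1 : ℂ)) :=
    (Complex.continuous_ofReal.tendsto _).comp hu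
  have hroot : q.2 ^ 2 - (q.1 : ℂ) * q.2 + 1 - Complex.exp (-(tau0 q.1 : ℂ) * q.2) = 0 := by
    have h1 := (((hl.pow 2).sub (hu'.mul hl)).add_const 1).sub
      ((Complex.continuous_exp.tendsto _).comp (ht.neg.mul hl))
    exact tendsto_nhds_unique h1 (tendsto_const_nhds.congr fun n => (hp2 (σ n)).symm)
  have hω : Tendsto (fun n => Complex.I * (omega0 (p (σ n)).1 : ℂ)) atTop
      (𝓝 (Complex.I * (omega0 q.1 : ℂ))) := by
    have hc : Continuous (fun a : ℝ => Complex.I * (omega0 a : ℂ)) := by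
      unfold omega0; fun_prop
    exact (hc.tendsto _).comp hu
  have hcases := roots_nonneg q.1 hA q.2 hre hroot
  refine (simple_roots q.1 hA q.2 hcases).2 ?_
  rcases hcases with h | h | h
  · exact local_unique q.1 q.2 _ _ (fun _ => 0) hA (fun n => hp1 (σ n)) hu hl
      (by rw [h]; exact tendsto_const_nhds) (fun n => hp2 (σ n))
      (fun n => (simple_roots _ (hp1 (σ n)) _ (Or.inl rfl)).1) (fun n => hp3 (σ n))
  · exact local_unique q.1 q.2 _ _ _ hA (fun n => hp1 (σ n)) hu hl
      (by rw [h]; exact hω) (fun n => hp2 (σ n))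
      (fun n => (simple_roots _ (hp1 (σ n)) _ (Or.inr (Or.inl rfl))).1) (fun n => hp4 (σ n))
  · exact local_unique q.1 q.2 _ _ _ hA (fun n => hp1 (σ n)) hu hl
      (by rw [h]; exact hω.neg) (fun n => hp2 (σ n))
      (fun n => (simple_roots _ (hp1 (σ n)) _ (Or.inr (Or.inr rfl))).1) (fun n => hp5 (σ n))
end
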